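/- arXiv:2508.16986 — 4 statements merged into one kernel-verified Lean document; each statement's English description precedes it below -/
import Mathlib

section
/- Let F = (A, R) be a finitary argumentation framework. Then the set of arguments a ∈ A that belong to at least one admissible extension of F is infinite if and only if F has an infinite admissible extension. -/
namespace AF

variable {α : Type*}

/-- `S` is conflict-free: no argument in `S` attacks another argument in `S`. -/
def ConflictFree (R : α → α → Prop) (S : Set α) : Prop :=
  ∀ a ∈ S, ∀ b ∈ S, ¬ R a b

/-- `S` defends the argument `a`: every attacker of `a` is attacked by some element of `S`. -/
def Defends (R : α → α → Prop) (S : Set α) (a : α) : Prop :=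
  ∀ x, R x a → ∃ y ∈ S, R y x

/-- `S` is admissible: conflict-free and defends each of its elements. -/
def Admissible (R : α → α → Prop) (S : Set α) : Prop :=
  ConflictFree R S ∧ ∀ a ∈ S, Defends R S a

/-- `S` is stable: conflict-free and attacks every argument outside of `S`. -/
def Stable (R : α → α → Prop) (S : Set α) : Prop :=
  ConflictFree R S ∧ ∀ a, a ∉ S → ∃ b ∈ S, R b a

/-- `S` is complete: conflict-free and equal to the set of arguments it defends. -/
def Complete (R : α → α → Prop) (S : Set α) : Prop :=
  ConflictFree R S ∧ S = {a | Defends R S a}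

/-- `S` is naive: conflict-free and no proper superset of `S` is conflict-free. -/
def Naive (R : α → α → Prop) (S : Set α) : Prop :=
  ConflictFree R S ∧ ∀ T : Set α, S ⊆ T → ConflictFree R T → T = S

/-- The framework is finitary: each argument has only finitely many attackers. -/
def Finitary (R : α → α → Prop) : Prop :=
  ∀ a : α, {x : α | R x a}.Finite

theorem limit_admissible (R : α → α → Prop) (hfin : Finitary R) (T : ℕ → Set α)
    (hT : ∀ n, Admissible R (T n)) :
    Admissible R {a | ∀ᶠ n in (Filter.hyperfilter ℕ : Filter ℕ), a ∈ T n} := by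
  refine ⟨?_, ?_⟩
  · intro a ha b hb hab
    obtain ⟨n, h1, h2⟩ := (Filter.Eventually.and ha hb).exists
    exact (hT n).1 a h1 b h2 hab
  · intro a ha x hx
    have h : (⋃ y ∈ {y | R y x}, {n | y ∈ T n}) ∈ Filter.hyperfilter ℕ := by
      refine Filter.mem_of_superset ha ?_
      intro n hn
      obtain ⟨y, hy, hyx⟩ := (hT n).2 a hn x hx
      exact Set.mem_biUnion (show y ∈ {y | R y x} from hyx) hy
    rw [Ultrafilter.finite_biUnion_mem_iff (hfin x)] at h
    obtain ⟨y, hyx, hy⟩ := h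
    exact ⟨y, hy, hyx⟩

theorem union_admissible (R : α → α → Prop) (S T : Set α) (hS : Admissible R S)
    (hT : Admissible R T) (h : ∀ x ∈ T, ∀ s ∈ S, ¬ R x s) : Admissible R (S ∪ T) := by
  have h' : ∀ s ∈ S, ∀ t ∈ T, ¬ R s t := by
    intro s hs t ht hst
    obtain ⟨y, hy, hys⟩ := hT.2 t ht s hst
    exact h y hy s hs hys
  refine ⟨?_, ?_⟩
  · rintro a (ha | ha) b (hb | hb)
    · exact hS.1 a ha b hb
    · exact h' a ha b hb
    · exact h a ha b hb
    · exact hT.1 a ha b hb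
  · rintro a (ha | ha) x hx
    · obtain ⟨y, hy, hyx⟩ := hS.2 a ha x hx
      exact ⟨y, Or.inl hy, hyx⟩
    · obtain ⟨y, hy, hyx⟩ := hT.2 a ha x hx
      exact ⟨y, Or.inr hy, hyx⟩

theorem exists_maximal_admissible (R : α → α → Prop) (T : Set α) (hT : Admissible R T) :
    ∃ S, T ⊆ S ∧ Maximal (fun S => S ∈ {S | Admissible R S}) S := by
  refine zorn_subset_nonempty {S | Admissible R S} ?_ T hT
  intro c hc hch _
  refine ⟨⋃₀ c, ⟨?_, ?_⟩, fun s hs => Set.subset_sUnion_of_mem hs⟩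
  · rintro a ⟨s, hs, ha⟩ b ⟨t, ht, hb⟩
    rcases hch.total hs ht with h | h
    · exact (hc ht).1 a (h ha) b hb
    · exact (hc hs).1 a ha b (h hb)
  · rintro a ⟨s, hs, ha⟩ x hx
    obtain ⟨y, hy, hyx⟩ := (hc hs).2 a ha x hx
    exact ⟨y, ⟨s, hs, hy⟩, hyx⟩

/-- Arguments lying in an admissible set that contains `X`. -/
def Acc (R : α → α → Prop) (X : Set α) : Set α :=
  {a | ∃ S, Admissible R S ∧ X ⊆ S ∧ a ∈ S}

theorem step (R : α → α → Prop) (hfin : Finitary R)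
    (hall : ∀ S, Admissible R S → S.Finite) (X : Set α) (hX : (Acc R X).Infinite) :
    ∃ x, x ∉ X ∧ (Acc R (insert x X)).Infinite := by
  obtain ⟨_, T, hT, hXT, _⟩ := hX.nonempty
  obtain ⟨S, hTS, hS⟩ := exists_maximal_admissible R T hT
  have hSa : Admissible R S := hS.1
  have hSf := hall S hSa
  have hN : (⋃ s ∈ S, {x | R x s}).Finite := hSf.biUnion fun s _ => hfin s
  by_contra! hcon
  apply hX
  have hfin2 : (⋃ x ∈ (⋃ s ∈ S, {x | R x s}), Acc R (insert x X)).Finite := by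
    refine hN.biUnion fun x hx => ?_
    simp only [Set.mem_iUnion, Set.mem_setOf_eq] at hx
    obtain ⟨s, hs, hxs⟩ := hx
    refine Set.not_infinite.mp (fun h => ?_)
    exact (hcon x (fun hxX => hSa.1 x (hTS (hXT hxX)) s hs hxs)).not_infinite h
  refine (hSf.union hfin2).subset ?_
  rintro a ⟨V, hV, hXV, haV⟩
  by_cases hc : ∃ x ∈ V, ∃ s ∈ S, R x s
  · obtain ⟨x, hx, s, hs, hxs⟩ := hc
    right
    simp only [Set.mem_iUnion]
    exact ⟨x, ⟨s, hs, hxs⟩, V, hV, Set.insert_subset hx hXV, haV⟩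
  · left
    push Not at hc
    have hu := union_admissible R S V hSa hV hc
    exact hS.2 hu Set.subset_union_left (Or.inr haV)

theorem credulously_accepted_infinite_iff_infinite_admissible
    (R : α → α → Prop) (hfin : Finitary R) :
    {a : α | ∃ S : Set α, Admissible R S ∧ a ∈ S}.Infinite ↔
      ∃ S : Set α, S.Infinite ∧ Admissible R S := by
  classical
  constructor
  · intro hinf
    by_contra hno
    have hall : ∀ S, Admissible R S → S.Finite := by
      intro S hS
      by_contra h
      exact hno ⟨S, h, hS⟩
    let P := {X : Finset α // (Acc R (X : Set α)).Infinite}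
    have hne : Nonempty P := ⟨⟨∅, by simpa [Acc] using hinf⟩⟩
    have hmax : NoMaxOrder P := ⟨by
      rintro ⟨X, hX⟩
      obtain ⟨x, hx, hi⟩ := step R hfin hall X hX
      refine ⟨⟨insert x X, by simpa using hi⟩, ?_⟩
      exact Subtype.mk_lt_mk.mpr (Finset.ssubset_insert (by simpa using hx))⟩
    obtain ⟨f, hf⟩ := Nat.exists_strictMono P
    have hT : ∀ n, ∃ T, Admissible R T ∧ ((f n).1 : Set α) ⊆ T := by
      intro n
      obtain ⟨_, T, hT, h, _⟩ := (f n).2.nonempty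
      exact ⟨T, hT, h⟩
    choose T hT hfT using hT
    have hlim := hall _ (limit_admissible R hfin T hT)
    have hsub : ∀ n, (f n).1 ⊆ hlim.toFinset := by
      intro n a ha
      rw [Set.Finite.mem_toFinset]
      have : ∀ᶠ m in (Filter.hyperfilter ℕ : Filter ℕ), n ≤ m :=
        Nat.hyperfilter_le_atTop (Filter.eventually_ge_atTop n)
      exact this.mono fun m hm => hfT m ((show (f n).1 ⊆ (f m).1 from hf.monotone hm) ha)
    have hcard : StrictMono fun n => (f n).1.card := fun a b hab =>
      Finset.card_lt_card (hf hab)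
    have h1 := hcard.le_apply (x := hlim.toFinset.card + 1)
    have h2 := Finset.card_le_card (hsub (hlim.toFinset.card + 1))
    omega
  · rintro ⟨S, hS, hA⟩
    exact hS.mono fun a ha => ⟨S, hA, ha⟩

end AF
end

section
/- Let F = (A, R) be an argumentation framework. Then F has exactly one naive extension if and only if the set {x ∈ A : ¬ x ↝ x} of non-self-attacking arguments is conflict-free. -/
namespace AF

variable {α : Type*}

theorem exists_naive_superset (R : α → α → Prop) (S : Set α) (hS : ConflictFree R S) :
    ∃ M, S ⊆ M ∧ Naive R M := by
  obtain ⟨M, hSM, hM⟩ := zorn_subset_nonempty {T | ConflictFree R T} (by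
    intro c hc hch _
    refine ⟨⋃₀ c, ?_, fun s hs => Set.subset_sUnion_of_mem hs⟩
    rintro a ⟨s, hs, has⟩ b ⟨t, ht, hbt⟩
    rcases hch.total hs ht with h | h
    · exact hc ht a (h has) b hbt
    · exact hc hs a has b (h hbt)) S hS
  exact ⟨M, hSM, hM.prop, fun T h hT => Set.Subset.antisymm (hM.le_of_ge hT h) h⟩

theorem unique_naive_iff
    (R : α → α → Prop) :
    (∃! S : Set α, Naive R S) ↔ ConflictFree R {x : α | ¬ R x x} := by
  constructor
  · rintro ⟨S, hS, hu⟩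
    have key : ∀ x, ¬ R x x → x ∈ S := by
      intro x hx
      obtain ⟨M, hM, hN⟩ := exists_naive_superset R {x} (by
        rintro a rfl b rfl
        exact hx)
      exact hu M hN ▸ hM rfl
    exact fun a ha b hb => hS.1 a (key a ha) b (key b hb)
  · intro h
    have sub : ∀ T, ConflictFree R T → T ⊆ {x : α | ¬ R x x} := fun T hT x hx => hT x hx x hx
    exact ⟨_, ⟨h, fun T h1 h2 => Set.Subset.antisymm (sub T h2) h1⟩,
      fun T hT => (hT.2 _ (sub T hT.1) h).symm⟩

end AF
end

section
/- Let F be an argumentation framework whose set of arguments is ℕ, and let D, E ⊆ ℕ. Then there exists a tree T ⊆ List ℕ such that the set of paths through T is in bijection with the set of stable extensions S of F satisfying D ⊆ S and S ∩ E = ∅. Moreover, if F is finitary, then T can be chosen to be finitely branching. -/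
namespace AF

variable {α : Type*}

/-- A tree: a set of finite strings closed under prefixes. -/
def IsTree (T : Set (List ℕ)) : Prop :=
  ∀ σ ∈ T, ∀ τ : List ℕ, τ <+: σ → τ ∈ T

/-- `π` is a path through `T`: all of its finite initial segments belong to `T`. -/
def IsPath (T : Set (List ℕ)) (π : ℕ → ℕ) : Prop :=
  ∀ n : ℕ, (List.range n).map π ∈ T

/-- `T` is finitely branching: every node has only finitely many immediate successors. -/
def FinitelyBranching (T : Set (List ℕ)) : Prop :=
  ∀ σ ∈ T, {n : ℕ | σ ++ [n] ∈ T}.Finite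

/-- Local correctness of the code `f` below `m`. -/
def Good (R : ℕ → ℕ → Prop) (D E : Set ℕ) (m : ℕ) (f : ℕ → ℕ) : Prop :=
  ∀ i < m, (f i = 0 → i ∉ E) ∧ (f i ≠ 0 → i ∉ D) ∧
    (f i = 0 → ∀ j < m, f j = 0 → ¬ R i j) ∧
    (∀ k, f i = k + 1 → R k i ∧ (k < m → f k = 0) ∧
      ∀ j < k, j < m → R j i → f j ≠ 0)

theorem Good.mono {R : ℕ → ℕ → Prop} {D E : Set ℕ} {m n : ℕ} {f g : ℕ → ℕ}
    (h : Good R D E n f) (hmn : m ≤ n) (hfg : ∀ i < m, f i = g i) : Good R D E m g := by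
  intro i hi
  obtain ⟨h1, h2, h3, h4⟩ := h i (by omega)
  rw [hfg i hi] at h1 h2 h3 h4
  refine ⟨h1, h2, fun h0 j hj hj0 => h3 h0 j (by omega) (by rw [hfg j hj, hj0]), fun k hk => ?_⟩
  obtain ⟨a, b, c⟩ := h4 k hk
  refine ⟨a, fun hkm => by rw [← hfg k hkm]; exact b (by omega), fun j hj hjm hr => ?_⟩
  rw [← hfg j hjm]
  exact c j hj (by omega) hr

/-- The tree of codes. -/
def codeTree (R : ℕ → ℕ → Prop) (D E : Set ℕ) : Set (List ℕ) :=
  {σ | Good R D E σ.length (fun i => σ.getD i 0)}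

theorem isPath_iff {R : ℕ → ℕ → Prop} {D E : Set ℕ} {π : ℕ → ℕ} :
    IsPath (codeTree R D E) π ↔ ∀ n, Good R D E n π := by
  refine forall_congr' fun n => ?_
  have key : ∀ i < n, ((List.range n).map π).getD i 0 = π i := by
    intro i hi
    simp [List.getD, hi]
  simp only [codeTree, Set.mem_setOf_eq, List.length_map, List.length_range]
  exact ⟨fun h => h.mono le_rfl key, fun h => h.mono le_rfl fun i hi => (key i hi).symm⟩

theorem stable_of_good {R : ℕ → ℕ → Prop} {D E : Set ℕ} {π : ℕ → ℕ}
    (h : ∀ n, Good R D E n π) :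
    Stable R {i | π i = 0} ∧ D ⊆ {i | π i = 0} ∧ {i | π i = 0} ∩ E = ∅ := by
  refine ⟨⟨fun a ha b hb => ?_, fun a ha => ?_⟩, fun a ha => ?_, ?_⟩
  · exact (h (a + b + 1) a (by omega)).2.2.1 ha b (by omega) hb
  · obtain ⟨k, hk⟩ := Nat.exists_eq_succ_of_ne_zero ha
    obtain ⟨h1, h2, -⟩ := (h (a + k + 1) a (by omega)).2.2.2 k hk
    exact ⟨k, h2 (by omega), h1⟩
  · by_contra hc
    exact (h (a + 1) a (by omega)).2.1 hc ha
  · ext a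
    simp only [Set.mem_inter_iff, Set.mem_setOf_eq, Set.mem_empty_iff_false, iff_false, not_and]
    exact (h (a + 1) a (by omega)).1

theorem code_le {R : ℕ → ℕ → Prop} {D E : Set ℕ} {π ρ : ℕ → ℕ}
    (h : ∀ n, Good R D E n π) (h' : ∀ n, Good R D E n ρ)
    (he : ∀ i, π i = 0 ↔ ρ i = 0) (i : ℕ) : π i ≤ ρ i := by
  by_contra! hlt
  obtain ⟨k, hk⟩ := Nat.exists_eq_succ_of_ne_zero (show π i ≠ 0 by omega)
  obtain ⟨l, hl⟩ := Nat.exists_eq_succ_of_ne_zero (show ρ i ≠ 0 from fun h0 => by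
    have := (he i).2 h0
    omega)
  obtain ⟨-, -, h3⟩ := (h (i + l + 1) i (by omega)).2.2.2 k hk
  obtain ⟨a, b, -⟩ := (h' (i + l + 1) i (by omega)).2.2.2 l hl
  exact h3 l (by omega) (by omega) a ((he l).2 (b (by omega)))

theorem exists_code {R : ℕ → ℕ → Prop} {D E S : Set ℕ}
    (hS : Stable R S ∧ D ⊆ S ∧ S ∩ E = ∅) :
    ∃ π : ℕ → ℕ, (∀ n, Good R D E n π) ∧ {i | π i = 0} = S := by
  classical
  obtain ⟨⟨hcf, hst⟩, hD, hE⟩ := hS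
  have hex : ∀ i, ∃ v : ℕ, (v = 0 ↔ i ∈ S) ∧
      ∀ k, v = k + 1 → R k i ∧ k ∈ S ∧ ∀ j < k, R j i → j ∉ S := by
    intro i
    by_cases hi : i ∈ S
    · exact ⟨0, by simp [hi], fun k hk => by omega⟩
    · have hx := hst i hi
      refine ⟨Nat.find hx + 1, by simp [hi], fun k hk => ?_⟩
      obtain rfl : Nat.find hx = k := by omega
      exact ⟨(Nat.find_spec hx).2, (Nat.find_spec hx).1,
        fun j hj hr hs => Nat.find_min hx hj ⟨hs, hr⟩⟩
  choose π h0 h1 using hex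
  refine ⟨π, fun n i hi => ⟨fun hz hiE => ?_, fun hz hiD => hz ((h0 i).2 (hD hiD)),
    fun hz j _ hj => hcf i ((h0 i).1 hz) j ((h0 j).1 hj), fun k hk => ?_⟩, ?_⟩
  · have : i ∈ S ∩ E := ⟨(h0 i).1 hz, hiE⟩
    rw [hE] at this
    exact this
  · obtain ⟨a, b, c⟩ := h1 i k hk
    exact ⟨a, fun _ => (h0 k).2 b, fun j hj _ hr hz => c j hj hr ((h0 j).1 hz)⟩
  · ext i
    exact h0 i

theorem tree_for_stable (R : ℕ → ℕ → Prop) (D E : Set ℕ) :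
    ∃ T : Set (List ℕ), IsTree T ∧
      Nonempty ({π : ℕ → ℕ // IsPath T π} ≃
        {S : Set ℕ // Stable R S ∧ D ⊆ S ∧ S ∩ E = ∅}) ∧
      (Finitary R → FinitelyBranching T) := by
  refine ⟨codeTree R D E, ?_, ⟨Equiv.ofBijective
    (fun p => ⟨{i | p.1 i = 0}, stable_of_good (isPath_iff.1 p.2)⟩) ⟨?_, ?_⟩⟩, ?_⟩
  · rintro σ hσ τ ⟨ρ, rfl⟩
    refine Good.mono hσ (by simp) fun i hi => ?_
    simp only [List.getD_append _ _ _ _ hi]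
  · rintro ⟨π, hπ⟩ ⟨ρ, hρ⟩ h
    have he : ∀ i, π i = 0 ↔ ρ i = 0 := fun i => Set.ext_iff.1 (Subtype.ext_iff.1 h) i
    rw [isPath_iff] at hπ hρ
    apply Subtype.ext
    funext i
    exact le_antisymm (code_le hπ hρ he i) (code_le hρ hπ (fun i => (he i).symm) i)
  · rintro ⟨S, hS⟩
    obtain ⟨π, hπ, hs⟩ := exists_code hS
    exact ⟨⟨π, isPath_iff.2 hπ⟩, Subtype.ext hs⟩
  · intro hF σ _
    refine (((hF σ.length).image (fun k => k + 1)).insert 0).subset fun n hn => ?_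
    rcases n with _ | k
    · exact Or.inl rfl
    · refine Or.inr ⟨k, ?_, rfl⟩
      exact ((hn σ.length (by simp)).2.2.2 k (by simp [List.getD])).1

end AF
end

section
/- Let F be an argumentation framework whose set of arguments is ℕ. Then there exists a tree T ⊆ List ℕ such that the set of paths through T is in bijection with the set of infinite naive extensions of F. -/
namespace AF

variable {α : Type*}

/-- Bounded witness condition: `S` below `k` shows an element at least `n`,
and a reason why `n` is in `S` or cannot be added. -/
def Wit (R : ℕ → ℕ → Prop) (S : Set ℕ) (n k : ℕ) : Prop :=
  (∃ m, m < k ∧ n ≤ m ∧ m ∈ S) ∧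
    (n ∈ S ∨ R n n ∨ ∃ m, m < k ∧ m ∈ S ∧ (R m n ∨ R n m))

theorem Wit.congr {R : ℕ → ℕ → Prop} {S S' : Set ℕ} {n k : ℕ}
    (h : ∀ m, m < k → (m ∈ S ↔ m ∈ S')) (hw : Wit R S n k) : Wit R S' n k := by
  obtain ⟨⟨m, hm, hnm, hmS⟩, h2⟩ := hw
  refine ⟨⟨m, hm, hnm, (h m hm).1 hmS⟩, ?_⟩
  rcases h2 with h2 | h2 | ⟨j, hj, hjS, h2⟩
  · exact Or.inl ((h n (by omega)).1 h2)
  · exact Or.inr (Or.inl h2)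
  · exact Or.inr (Or.inr ⟨j, hj, (h j hj).1 hjS, h2⟩)

theorem wit_iff (R : ℕ → ℕ → Prop) (S : Set ℕ) :
    (S.Infinite ∧ Naive R S) ↔ (ConflictFree R S ∧ ∀ n, ∃ k, Wit R S n k) := by
  constructor
  · rintro ⟨hi, hc, hm⟩
    refine ⟨hc, fun n => ?_⟩
    obtain ⟨m, hmS, hnm⟩ := hi.exists_gt n
    by_cases h : n ∈ S ∨ R n n ∨ ∃ m, m ∈ S ∧ (R m n ∨ R n m)
    · rcases h with h | h | ⟨j, hj, h⟩
      · exact ⟨m + 1, ⟨m, by omega, by omega, hmS⟩, Or.inl h⟩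
      · exact ⟨m + 1, ⟨m, by omega, by omega, hmS⟩, Or.inr (Or.inl h)⟩
      · exact ⟨m + j + 1, ⟨m, by omega, by omega, hmS⟩,
          Or.inr (Or.inr ⟨j, by omega, hj, h⟩)⟩
    · exfalso
      push Not at h
      obtain ⟨h1, h2, h3⟩ := h
      have : insert n S = S := by
        apply hm _ (Set.subset_insert n S)
        intro a ha b hb
        rcases ha with rfl | ha <;> rcases hb with rfl | hb
        · exact h2
        · exact (h3 b hb).2
        · exact (h3 a ha).1
        · exact hc a ha b hb
      exact h1 (this ▸ Set.mem_insert n S)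
  · rintro ⟨hc, hw⟩
    refine ⟨?_, hc, ?_⟩
    · apply Set.infinite_of_forall_exists_gt
      intro n
      obtain ⟨k, ⟨m, _, hm, hmS⟩, _⟩ := hw (n + 1)
      exact ⟨m, hmS, by omega⟩
    · intro T hST hT
      refine Set.Subset.antisymm (fun n hn => ?_) hST
      obtain ⟨k, _, h | h | ⟨j, _, hj, h⟩⟩ := hw n
      · exact h
      · exact absurd h (hT n hn n hn)
      · rcases h with h | h
        · exact absurd h (hT j (hST hj) n hn)
        · exact absurd h (hT n hn j (hST hj))

open Classical in
/-- Code of a set: least witness together with the membership bit. -/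
noncomputable def code (R : ℕ → ℕ → Prop) (S : Set ℕ) (n : ℕ) : ℕ :=
  2 * sInf {k | Wit R S n k} + if n ∈ S then 1 else 0

theorem mem_iff_code (R : ℕ → ℕ → Prop) (S : Set ℕ) (n : ℕ) :
    n ∈ S ↔ code R S n % 2 = 1 := by
  unfold code
  split_ifs with h <;> simp [h] <;> omega

theorem code_div (R : ℕ → ℕ → Prop) (S : Set ℕ) (n : ℕ) :
    code R S n / 2 = sInf {k | Wit R S n k} := by
  unfold code
  split_ifs with h <;> omega

theorem code_closed (R : ℕ → ℕ → Prop) (π : ℕ → ℕ)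
    (h : ∀ N, ∃ S : Set ℕ, (S.Infinite ∧ Naive R S) ∧ ∀ i, i < N → code R S i = π i) :
    ∃ S : Set ℕ, (S.Infinite ∧ Naive R S) ∧ code R S = π := by
  choose F hF hc using h
  let S : Set ℕ := {n | π n % 2 = 1}
  have hS : ∀ N m, m < N → (m ∈ F N ↔ m ∈ S) := by
    intro N m hm
    rw [mem_iff_code R, hc N m hm]; rfl
  have key : ∀ n, Wit R S n (π n / 2) ∧ sInf {k | Wit R S n k} = π n / 2 := by
    intro n
    let N := n + π n / 2 + 1
    have e : π n / 2 = sInf {k | Wit R (F N) n k} := by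
      rw [← code_div, hc N n (by omega)]
    have hw : Wit R (F N) n (π n / 2) := by
      rw [e]
      exact Nat.sInf_mem (s := {k | Wit R (F N) n k}) (((wit_iff R (F N)).1 (hF N)).2 n)
    have hw' : Wit R S n (π n / 2) := hw.congr fun m hm => hS N m (by omega)
    refine ⟨hw', le_antisymm (Nat.sInf_le hw') ?_⟩
    by_contra hlt
    push Not at hlt
    have h1 : Wit R S n (sInf {k | Wit R S n k}) :=
      Nat.sInf_mem (s := {k | Wit R S n k}) ⟨_, hw'⟩
    have h2 : Wit R (F N) n (sInf {k | Wit R S n k}) :=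
      h1.congr fun m hm => (hS N m (by omega)).symm
    have h3 : sInf {k | Wit R (F N) n k} ≤ sInf {k | Wit R S n k} := Nat.sInf_le h2
    omega
  refine ⟨S, (wit_iff R S).2 ⟨?_, fun n => ⟨_, (key n).1⟩⟩, ?_⟩
  · intro a ha b hb
    exact (hF (a + b + 1)).2.1 a ((hS _ a (by omega)).2 ha) b ((hS _ b (by omega)).2 hb)
  · funext n
    have h1 := code_div R S n
    rw [(key n).2] at h1
    have h2 : code R S n % 2 = 1 ↔ π n % 2 = 1 := (mem_iff_code R S n).symm
    omega

theorem tree_for_infinite_naive (R : ℕ → ℕ → Prop) :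
    ∃ T : Set (List ℕ), IsTree T ∧
      Nonempty ({π : ℕ → ℕ // IsPath T π} ≃
        {S : Set ℕ // S.Infinite ∧ Naive R S}) := by
  let X := {S : Set ℕ // S.Infinite ∧ Naive R S}
  let f : X → (ℕ → ℕ) := fun S => code R S.1
  have hf : Function.Injective f := by
    intro S S' h
    apply Subtype.ext
    ext n
    rw [mem_iff_code R, mem_iff_code R S'.1]
    have : code R S.1 n = code R S'.1 n := congrFun h n
    rw [this]
  let T : Set (List ℕ) := {σ | ∃ S : X, ∃ n, σ = (List.range n).map (f S)}
  have hT : ∀ π, π ∈ Set.range f ↔ IsPath T π := by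
    intro π
    constructor
    · rintro ⟨S, rfl⟩ n
      exact ⟨S, n, rfl⟩
    · intro h
      obtain ⟨S, hS, e⟩ := code_closed R π (by
        intro N
        obtain ⟨S, n, e⟩ := h N
        have hn : N = n := by simpa using congrArg List.length e
        subst hn
        refine ⟨S.1, S.2, fun i hi => ?_⟩
        exact (List.map_inj_left.1 e i (List.mem_range.2 hi)).symm)
      exact ⟨⟨S, hS⟩, e⟩
  refine ⟨T, ?_, ⟨((Equiv.ofInjective f hf).trans (Equiv.subtypeEquivRight hT)).symm⟩⟩
  rintro σ ⟨S, n, rfl⟩ τ hτ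
  refine ⟨S, min τ.length n, ?_⟩
  rw [List.prefix_iff_eq_take] at hτ
  conv_lhs => rw [hτ]
  rw [← List.map_take, List.take_range]

end AF
end
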